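/- For d ≥ 3 and n ∈ ℕ, the dimension of the space H_n^d of spherical harmonics of degree n on S^{d-1} equals (2n+d−2)(n+d−3)! / ((d−2)! · n!). -/

import Mathlib

open MvPolynomial

/-- The space of spherical harmonics of degree `n` on the unit sphere `S^{d-1} ⊂ ℝ^d`:
restrictions to the sphere of harmonic homogeneous polynomials of degree `n`. -/
noncomputable def harmSpace (d n : ℕ) :
    Submodule ℝ ((Metric.sphere (0 : EuclideanSpace ℝ (Fin d)) 1) → ℝ) :=
  Submodule.span ℝ {f | ∃ P : MvPolynomial (Fin d) ℝ,
    P.IsHomogeneous n ∧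
    (∑ i : Fin d, MvPolynomial.pderiv i (MvPolynomial.pderiv i P)) = 0 ∧
    ∀ x : Metric.sphere (0 : EuclideanSpace ℝ (Fin d)) 1,
      f x = MvPolynomial.eval (fun i => (x : EuclideanSpace ℝ (Fin d)) i) P}

namespace MvPolynomial

section Laplacian

variable {σ K : Type*} [Fintype σ] [Field K]

variable (σ K) in
/-- The Laplace operator on polynomials. -/
noncomputable def laplacian : MvPolynomial σ K →ₗ[K] MvPolynomial σ K :=
  ∑ i, (pderiv i).toLinearMap ∘ₗ (pderiv i).toLinearMap

theorem laplacian_apply (P : MvPolynomial σ K) :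
    laplacian σ K P = ∑ i, pderiv i (pderiv i P) := by
  simp [laplacian]

theorem IsHomogeneous.laplacian {P : MvPolynomial σ K} {n : ℕ} (hP : P.IsHomogeneous n) :
    (laplacian σ K P).IsHomogeneous (n - 2) := by
  rw [laplacian_apply]
  exact IsHomogeneous.sum _ _ _ fun i _ => hP.pderiv.pderiv

theorem IsHomogeneous.laplacian_eq_zero {P : MvPolynomial σ K} {n : ℕ}
    (hP : P.IsHomogeneous n) (hn : n < 2) : MvPolynomial.laplacian σ K P = 0 := by
  rw [laplacian_apply]
  refine Finset.sum_eq_zero fun i _ => ?_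
  have h : (pderiv i P).IsHomogeneous 0 := by
    have := hP.pderiv (i := i)
    rwa [show n - 1 = 0 by omega] at this
  rw [totalDegree_eq_zero_iff_eq_C.1 (Nat.le_zero.1 h.totalDegree_le), pderiv_C]

theorem monomial_mem_map_laplacian [CharZero K] (i₀ : σ) (s : σ →₀ ℕ) :
    monomial s (1 : K) ∈
      (homogeneousSubmodule σ K (s.degree + 2)).map (laplacian σ K) := by
  classical
  induction hm : s.degree - s i₀ using Nat.strong_induction_on generalizing s with
  | _ m ih =>
  set t := s + Finsupp.single i₀ 2 with ht
  have htdeg : t.degree = s.degree + 2 := by simp [ht]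
  have ht_mem : monomial t (1 : K) ∈ homogeneousSubmodule σ K (s.degree + 2) :=
    (mem_homogeneousSubmodule _ _).2 (isHomogeneous_monomial _ htdeg)
  have hlap := Submodule.mem_map_of_mem (f := laplacian σ K) ht_mem
  rw [laplacian_apply, ← Finset.add_sum_erase _ _ (Finset.mem_univ i₀)] at hlap
  have hrest : ∑ i ∈ Finset.univ.erase i₀, pderiv i (pderiv i (monomial t (1 : K))) ∈
      (homogeneousSubmodule σ K (s.degree + 2)).map (laplacian σ K) := by
    refine Submodule.sum_mem _ fun i hi => ?_
    have hne : i ≠ i₀ := Finset.ne_of_mem_erase hi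
    have hti : t i = s i := by simp [ht, hne]
    rw [pderiv_monomial, pderiv_monomial]
    by_cases hsi : s i < 2
    · have : ((1 : K) * t i) * (t - Finsupp.single i 1 : σ →₀ ℕ) i = 0 := by
        rw [hti, Finsupp.tsub_apply, hti]
        interval_cases s i <;> simp
      rw [this, monomial_zero]
      exact zero_mem _
    · set u := t - Finsupp.single i 1 - Finsupp.single i 1 with hu
      have hut : u + Finsupp.single i 2 = t := by
        ext j
        by_cases hj : j = i
        · subst hj
          simp only [hu, Finsupp.add_apply, Finsupp.tsub_apply, Finsupp.single_eq_same, hti]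
          omega
        · simp [hu, Finsupp.single_eq_of_ne hj]
      have hudeg : u.degree = s.degree := by
        have := congrArg Finsupp.degree hut
        rw [htdeg] at this
        simpa using this
      have hu0 : u i₀ = s i₀ + 2 := by
        simp [hu, ht, Finsupp.single_eq_of_ne hne.symm]
      have hule : u i₀ ≤ u.degree := Finsupp.le_degree i₀ u
      have := ih (u.degree - u i₀) (by omega) u rfl
      rw [hudeg] at this
      rw [← mul_one (_ * _), ← smul_eq_mul, ← smul_monomial]
      exact Submodule.smul_mem _ _ this
  have hmain := (Submodule.add_mem_iff_left _ hrest).1 hlap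
  have hs : t - Finsupp.single i₀ 1 - Finsupp.single i₀ 1 = s := by
    rw [tsub_tsub, ← Finsupp.single_add, ht, add_tsub_cancel_right]
  have hc : (1 : K) * t i₀ * (t - Finsupp.single i₀ 1 : σ →₀ ℕ) i₀ ≠ 0 := by
    rw [one_mul, ← Nat.cast_mul, Nat.cast_ne_zero]
    simp [ht]
  rw [pderiv_monomial, pderiv_monomial, hs, ← mul_one (_ * _), ← smul_eq_mul,
    ← smul_monomial] at hmain
  exact (Submodule.smul_mem_iff _ hc).1 hmain

theorem map_laplacian_homogeneousSubmodule [CharZero K] [Nonempty σ] (n : ℕ) :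
    (homogeneousSubmodule σ K (n + 2)).map (laplacian σ K) = homogeneousSubmodule σ K n := by
  apply le_antisymm
  · rintro _ ⟨P, hP, rfl⟩
    exact IsHomogeneous.laplacian hP
  · intro P hP
    rw [P.as_sum]
    refine Submodule.sum_mem _ fun s hs => ?_
    have hdeg : s.degree = n := by
      rw [Finsupp.degree_eq_weight_one]
      exact hP (mem_support_iff.1 hs)
    rw [← mul_one (coeff s P), ← smul_eq_mul, ← smul_monomial, ← hdeg]
    exact Submodule.smul_mem _ _ (monomial_mem_map_laplacian (Classical.arbitrary σ) s)

theorem finrank_homogeneousSubmodule (n : ℕ) :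
    Module.finrank K (homogeneousSubmodule σ K n) = (Fintype.card σ).multichoose n := by
  classical
  have hset : {s : σ →₀ ℕ | s.degree = n} =
      ((Finset.univ : Finset σ).finsuppAntidiag n : Set (σ →₀ ℕ)) := by
    ext s
    simp [Finset.mem_finsuppAntidiag, Finsupp.degree_eq_sum]
  rw [homogeneousSubmodule_eq_finsupp_supported, hset]
  rw [(AddMonoidAlgebra.supportedEquivFinsupp _).finrank_eq, Module.finrank_finsupp_self]
  simp [Finset.card_finsuppAntidiag_nat_eq_multichoose]

instance (n : ℕ) : Module.Finite K (homogeneousSubmodule σ K n) :=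
  Module.Finite.iff_fg.2 (homogeneousSubmodule_fg σ K n)

variable (σ K) in
/-- The harmonic homogeneous polynomials of degree `n`. -/
noncomputable def harmonicSubmodule (n : ℕ) : Submodule K (MvPolynomial σ K) :=
  homogeneousSubmodule σ K n ⊓ LinearMap.ker (laplacian σ K)

theorem finrank_map_laplacian_add_finrank_harmonicSubmodule (n : ℕ) :
    Module.finrank K ((homogeneousSubmodule σ K n).map (laplacian σ K)) +
      Module.finrank K (harmonicSubmodule σ K n) = (Fintype.card σ).multichoose n := by
  rw [← finrank_homogeneousSubmodule (σ := σ) (K := K),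
    ← ((laplacian σ K).domRestrict (homogeneousSubmodule σ K n)).finrank_range_add_finrank_ker,
    LinearMap.range_domRestrict, LinearMap.ker_domRestrict, harmonicSubmodule,
    ← Submodule.map_comap_subtype, Submodule.finrank_map_subtype_eq]

theorem finrank_harmonicSubmodule_of_lt_two {n : ℕ} (hn : n < 2) :
    Module.finrank K (harmonicSubmodule σ K n) = (Fintype.card σ).multichoose n := by
  rw [← finrank_homogeneousSubmodule (σ := σ) (K := K), harmonicSubmodule, inf_eq_left.2]
  exact fun P hP => IsHomogeneous.laplacian_eq_zero hP hn

theorem multichoose_add_finrank_harmonicSubmodule [CharZero K] [Nonempty σ] (n : ℕ) :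
    (Fintype.card σ).multichoose n + Module.finrank K (harmonicSubmodule σ K (n + 2)) =
      (Fintype.card σ).multichoose (n + 2) := by
  rw [← finrank_map_laplacian_add_finrank_harmonicSubmodule (σ := σ) (K := K) (n + 2),
    map_laplacian_homogeneousSubmodule, finrank_homogeneousSubmodule]

end Laplacian

theorem IsHomogeneous.eval_smul {σ R : Type*} [CommSemiring R] {P : MvPolynomial σ R} {n : ℕ}
    (hP : P.IsHomogeneous n) (c : R) (x : σ → R) : eval (c • x) P = c ^ n * eval x P := by
  rw [eval_eq, eval_eq, Finset.mul_sum]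
  refine Finset.sum_congr rfl fun s hs => ?_
  have hdeg : ∑ i ∈ s.support, s i = n := by
    rw [← Finsupp.degree_apply, Finsupp.degree_eq_weight_one]
    exact hP (mem_support_iff.1 hs)
  simp only [Pi.smul_apply, smul_eq_mul, mul_pow, Finset.prod_mul_distrib,
    Finset.prod_pow_eq_pow_sum, hdeg]
  ring

end MvPolynomial

/-- Restriction of polynomials to the unit sphere. -/
noncomputable def sphereRestrict (d : ℕ) :
    MvPolynomial (Fin d) ℝ →ₗ[ℝ] (Metric.sphere (0 : EuclideanSpace ℝ (Fin d)) 1 → ℝ) :=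
  LinearMap.pi fun x => (aeval fun i => (x : EuclideanSpace ℝ (Fin d)) i).toLinearMap

theorem sphereRestrict_apply {d : ℕ} (P : MvPolynomial (Fin d) ℝ)
    (x : Metric.sphere (0 : EuclideanSpace ℝ (Fin d)) 1) :
    sphereRestrict d P x = eval (fun i => (x : EuclideanSpace ℝ (Fin d)) i) P := by
  simp [sphereRestrict, aeval_eq_eval]

theorem MvPolynomial.IsHomogeneous.eq_zero_of_sphereRestrict {d n : ℕ} (hd : 0 < d)
    {P : MvPolynomial (Fin d) ℝ} (hP : P.IsHomogeneous n) (h : sphereRestrict d P = 0) :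
    P = 0 := by
  have hunit : ∀ y : EuclideanSpace ℝ (Fin d), ‖y‖ = 1 → eval (fun i => y i) P = 0 := by
    intro y hy
    rw [← sphereRestrict_apply P ⟨y, by simpa using hy⟩, h, Pi.zero_apply]
  have hscale : ∀ (c : ℝ) (y : EuclideanSpace ℝ (Fin d)), ‖y‖ = 1 →
      eval (fun i => (c • y) i) P = 0 := by
    intro c y hy
    have := hP.eval_smul c (fun i => y i)
    rw [hunit y hy, mul_zero] at this
    exact this
  refine MvPolynomial.funext fun x => ?_
  rw [map_zero]
  have : Nonempty (Fin d) := ⟨⟨0, hd⟩⟩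
  obtain ⟨c, y, hy, hx⟩ : ∃ (c : ℝ) (y : EuclideanSpace ℝ (Fin d)), ‖y‖ = 1 ∧
      c • y = WithLp.toLp 2 x := by
    by_cases hx : WithLp.toLp 2 x = 0
    · obtain ⟨y, hy⟩ := exists_norm_eq (EuclideanSpace ℝ (Fin d)) zero_le_one
      exact ⟨0, y, hy, by rw [hx, zero_smul]⟩
    · refine ⟨‖WithLp.toLp 2 x‖, ‖WithLp.toLp 2 x‖⁻¹ • WithLp.toLp 2 x, ?_, ?_⟩
      · exact norm_smul_inv_norm (𝕜 := ℝ) hx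
      · rw [smul_inv_smul₀ (norm_ne_zero_iff.2 hx)]
  have := hscale c y hy
  rwa [hx] at this

theorem harmSpace_eq_map (d n : ℕ) :
    harmSpace d n = (harmonicSubmodule (Fin d) ℝ n).map (sphereRestrict d) := by
  rw [harmSpace, ← Submodule.span_eq ((harmonicSubmodule (Fin d) ℝ n).map (sphereRestrict d))]
  congr 1
  ext f
  constructor
  · rintro ⟨P, hP, hlap, hf⟩
    refine ⟨P, ⟨hP, (laplacian_apply P).trans hlap⟩, ?_⟩
    ext x
    rw [hf, sphereRestrict_apply]
  · rintro ⟨P, ⟨hP, hlap⟩, rfl⟩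
    exact ⟨P, hP, (laplacian_apply P).symm.trans hlap, sphereRestrict_apply P⟩

theorem finrank_harmSpace {d : ℕ} (hd : 0 < d) (n : ℕ) :
    Module.finrank ℝ (harmSpace d n) = Module.finrank ℝ (harmonicSubmodule (Fin d) ℝ n) := by
  rw [harmSpace_eq_map]
  have hinj : Function.Injective
      ((sphereRestrict d).domRestrict (harmonicSubmodule (Fin d) ℝ n)) := by
    rw [injective_iff_map_eq_zero]
    rintro ⟨P, hP, hlap⟩ h
    exact Subtype.ext (hP.eq_zero_of_sphereRestrict hd h)
  rw [← LinearMap.range_domRestrict, LinearMap.finrank_range_of_inj hinj]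

/-- For d ≥ 3 and n ∈ ℕ, dim H_n^d = (2n+d−2)(n+d−3)! / ((d−2)!·n!)
(stated in multiplied-out form, since the division is exact). -/
theorem stmt2 (d n : ℕ) (hd : 3 ≤ d) :
    Module.finrank ℝ (harmSpace d n) * ((d-2).factorial * n.factorial)
      = (2*n+d-2) * (n+d-3).factorial := by
  obtain ⟨m, rfl⟩ := Nat.exists_eq_add_of_le' hd
  rw [finrank_harmSpace (by omega)]
  match n with
  | 0 =>
    rw [finrank_harmonicSubmodule_of_lt_two (by norm_num)]
    simp [Nat.factorial_succ]
  | 1 =>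
    rw [finrank_harmonicSubmodule_of_lt_two (by norm_num)]
    rw [show 1 + (m + 3) - 3 = m + 1 by omega]
    simp [add_comm 2]
  | k + 2 =>
    have h := multichoose_add_finrank_harmonicSubmodule (σ := Fin (m + 3)) (K := ℝ) k
    set r := Module.finrank ℝ (harmonicSubmodule (Fin (m + 3)) ℝ (k + 2))
    rw [Fintype.card_fin, Nat.multichoose_eq, Nat.multichoose_eq] at h
    rw [show m + 3 + k - 1 = (m + 2) + k by omega,
      show m + 3 + (k + 2) - 1 = (m + 2) + (k + 2) by omega] at h
    have h₁ := Nat.add_choose_mul_factorial_mul_factorial (m + 2) k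
    have h₂ := Nat.add_choose_mul_factorial_mul_factorial (m + 2) (k + 2)
    rw [← h, show m + 2 + (k + 2) = m + 2 + k + 1 + 1 by ring] at h₂
    rw [show m + 3 - 2 = m + 1 by omega, show 2 * (k + 2) + (m + 3) - 2 = 2 * k + m + 5 by omega,
      show k + 2 + (m + 3) - 3 = m + 2 + k by omega]
    apply Nat.eq_of_mul_eq_mul_left (Nat.succ_pos (m + 1))
    simp only [Nat.factorial_succ] at h₁ h₂ ⊢
    zify at h₁ h₂ ⊢
    linear_combination h₂ - ((k : ℤ) + 2) * (k + 1) * h₁
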